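/- arXiv:math/0606306 — 4 statements merged into one kernel-verified Lean document; each statement's English description precedes it below -/
import Mathlib

section
/- Let D ⊆ ℂ be a bounded domain whose boundary ∂D has exactly n ≥ 2 connected components Γ_1, …, Γ_n, each containing more than one point. For 1 ≤ j ≤ n−1 let ω_j : cl(D) → ℝ be continuous on cl(D), harmonic on D, with ω_j ≡ 1 on Γ_j and ω_j ≡ 0 on Γ_k for every k ≠ j. Then for every real-valued harmonic function h on D there exists a unique tuple (c_1, …, c_{n−1}) ∈ ℝ^{n−1} such that the function h + Σ_{j=1}^{n−1} c_j ω_j is the real part of a (single-valued) holomorphic function on D. -/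
open Complex Set

/-- A real-valued function is harmonic on a set `s` (intended: `s` open) if it is C²
there and its Laplacian vanishes at every point of `s`. -/
def HarmonicOnR (u : ℂ → ℝ) (s : Set ℂ) : Prop :=
  ContDiffOn ℝ 2 u s ∧
    ∀ z ∈ s,
      iteratedFDeriv ℝ 2 u z ![1, 1] + iteratedFDeriv ℝ 2 u z ![Complex.I, Complex.I] = 0

/-! The obstruction to a conjugate lives in the quotient of the harmonic functions on `D` by the
real parts of holomorphic functions. Choose a point `wᵢ` on each boundary component. A cycle in `D`
never winds about the outer boundary component, so if it does not wind about the `wᵢ` on the other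
`n - 1` components it does not wind about any point outside `D`, and by Cauchy's theorem (in its
homology form, after Dixon) every holomorphic function has integral zero along it. Hence a
holomorphic function is a derivative up to a combination of these `n - 1` fractions `1 / (z - wᵢ)`,
and a harmonic function is the real part of a holomorphic function up to a combination of the
`log |z - wᵢ|`: the quotient has dimension at most `n - 1`.

The `n - 1` functions `ωⱼ` are independent in the quotient. Indeed a combination of them takes
finitely many values on the boundary, and if it is the real part of a holomorphic function it is
constant, by the open mapping theorem; it vanishes on the last component, so it is zero. The `ωⱼ`
are therefore a basis of the quotient, in which `-h` has unique coordinates. -/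

open Filter Metric
open scoped Topology

section HolomorphicParameter

variable {E : Type*} [NormedAddCommGroup E] [NormedSpace ℂ E] [CompleteSpace E]
  {U : Set ℂ}

theorem tendstoLocallyUniformlyOn_of_continuousOn_uncurry {X Y Z : Type*} [TopologicalSpace X]
    [TopologicalSpace Y] [UniformSpace Z] {k : X → Y → Z} {s : Set X} {t : Set Y}
    (hk : ContinuousOn (Function.uncurry k) (s ×ˢ t)) {y : Y} (hy : y ∈ t) :
    TendstoLocallyUniformlyOn (fun y x => k x y) (fun x => k x y) (𝓝[t] y) s := by
  refine tendstoLocallyUniformlyOn_iff_filter.2 fun x hx => ?_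
  have hxy : Tendsto (Function.uncurry k) (𝓝[s] x ×ˢ 𝓝[t] y) (𝓝 (k x y)) := by
    rw [← nhdsWithin_prod_eq]
    exact hk (x, y) ⟨hx, hy⟩
  have hmoving : Tendsto (fun q : Y × X => k q.2 q.1) (𝓝[t] y ×ˢ 𝓝[s] x) (𝓝 (k x y)) :=
    hxy.comp tendsto_prod_swap
  have hfixed : Tendsto (fun q : Y × X => k q.2 y) (𝓝[t] y ×ˢ 𝓝[s] x) (𝓝 (k x y)) :=
    hxy.comp (tendsto_snd.prodMk (tendsto_const_nhdsWithin hy))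
  exact (hfixed.prodMk_nhds hmoving).mono_right (nhds_le_uniformity _)

theorem continuousOn_deriv_of_continuousOn_uncurry {X : Type*} [TopologicalSpace X]
    {k : ℂ → X → E} {t : Set X} (hU : IsOpen U)
    (hk : ContinuousOn (Function.uncurry k) (U ×ˢ t))
    (hd : ∀ x ∈ t, DifferentiableOn ℂ (fun z => k z x) U) {z : ℂ} (hz : z ∈ U) :
    ContinuousOn (fun x => deriv (fun z => k z x) z) t := fun _ hx =>
  ((tendstoLocallyUniformlyOn_of_continuousOn_uncurry hk hx).deriv
    (eventually_mem_nhdsWithin.mono hd) hU).tendsto_at hz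

theorem differentiableOn_intervalIntegral_of_param {a b : ℝ} {k : ℂ → ℝ → E} (hU : IsOpen U)
    (hk : ContinuousOn (Function.uncurry k) (U ×ˢ uIcc a b))
    (hd : ∀ t ∈ uIcc a b, DifferentiableOn ℂ (fun z => k z t) U) :
    DifferentiableOn ℂ (fun z => ∫ t in a..b, k z t) U := by
  intro z₀ hz₀
  obtain ⟨r, hr, hrU⟩ := nhds_basis_closedBall.mem_iff.1 (hU.mem_nhds hz₀)
  obtain ⟨M, hM⟩ := ((isCompact_closedBall z₀ r).prod isCompact_uIcc).exists_bound_of_continuousOn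
    (hk.mono (prod_mono hrU Subset.rfl))
  have hint : ∀ f : ℝ → E, ContinuousOn f (uIcc a b) →
      MeasureTheory.AEStronglyMeasurable f (MeasureTheory.volume.restrict (uIoc a b)) :=
    fun f hf => (hf.mono uIoc_subset_uIcc).aestronglyMeasurable measurableSet_uIoc
  have hkz : ∀ z ∈ U, ContinuousOn (k z) (uIcc a b) := fun z hz =>
    hk.comp (Continuous.prodMk_right z).continuousOn fun t ht => ⟨hz, ht⟩
  have hball : ball z₀ (r / 2) ⊆ U :=
    (ball_subset_closedBall.trans (closedBall_subset_closedBall (half_le_self hr.le))).trans hrU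
  have hbound : ∀ t ∈ uIoc a b, ∀ z ∈ ball z₀ (r / 2),
      ‖deriv (fun z => k z t) z‖ ≤ M / (r / 2) := by
    intro t ht z hz
    have hsub : closedBall z (r / 2) ⊆ closedBall z₀ r :=
      closedBall_subset_closedBall' (by linarith [mem_ball.1 hz])
    refine Complex.norm_deriv_le_of_forall_mem_sphere_norm_le (half_pos hr) ?_ fun w hw =>
      hM (w, t) ⟨hsub (sphere_subset_closedBall hw), uIoc_subset_uIcc ht⟩
    exact ((hd t (uIoc_subset_uIcc ht)).mono (hsub.trans hrU)).diffContOnCl_ball Subset.rfl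
  exact (intervalIntegral.hasDerivAt_integral_of_dominated_loc_of_deriv_le
    (F' := fun z t => deriv (fun z => k z t) z) (ball_mem_nhds z₀ (half_pos hr))
    (Eventually.mono (hU.mem_nhds hz₀) fun z hz => hint _ (hkz z hz))
    (hkz z₀ hz₀).intervalIntegrable
    (hint _ (continuousOn_deriv_of_continuousOn_uncurry hU hk hd hz₀))
    (.of_forall hbound) intervalIntegrable_const
    (.of_forall fun t ht z hz => ((hd t (uIoc_subset_uIcc ht)).differentiableAt
      (hU.mem_nhds (hball hz))).hasDerivAt)).2.differentiableAt.differentiableWithinAt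

end HolomorphicParameter

section DSlope

variable {𝕜 F : Type*} [NontriviallyNormedField 𝕜] [NormedAddCommGroup F] [NormedSpace 𝕜 F]
  {f : 𝕜 → F} {a b : 𝕜}

theorem dslope_comm (f : 𝕜 → F) (a b : 𝕜) : dslope f a b = dslope f b a := by
  rcases eq_or_ne a b with rfl | h
  · rfl
  · rw [dslope_of_ne _ h.symm, dslope_of_ne _ h, slope_comm]

theorem continuousAt_uncurry_dslope_of_ne (h : a ≠ b) (ha : ContinuousAt f a)
    (hb : ContinuousAt f b) : ContinuousAt (Function.uncurry (dslope f)) (a, b) := by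
  have hslope : ContinuousAt (fun p : 𝕜 × 𝕜 => (p.2 - p.1)⁻¹ • (f p.2 - f p.1)) (a, b) :=
    (continuousAt_snd.sub continuousAt_fst).inv₀ (sub_ne_zero.2 h.symm) |>.smul
      (hb.snd'.sub ha.fst')
  refine hslope.congr ?_
  filter_upwards [(isOpen_ne_fun continuous_fst continuous_snd).mem_nhds h] with p hp
  exact (dslope_of_ne f (Ne.symm hp)).symm

theorem continuousAt_uncurry_dslope_self (hf : HasStrictDerivAt f (deriv f a) a)
    (hd : ContinuousAt (deriv f) a) : ContinuousAt (Function.uncurry (dslope f)) (a, a) := by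
  refine nhds_basis_closedBall.tendsto_right_iff.2 fun ε hε => ?_
  have hderiv : ∀ᶠ p : 𝕜 × 𝕜 in 𝓝 (a, a), ‖deriv f p.1 - deriv f a‖ ≤ ε := by
    simpa only [mem_closedBall, dist_eq_norm] using
      hd.fst'.eventually_mem (closedBall_mem_nhds (deriv f a) hε)
  filter_upwards [hf.isLittleO.def hε, hderiv] with ⟨x, y⟩ hxy hx
  rw [mem_closedBall, dist_eq_norm]
  simp only [Function.uncurry_apply_pair, dslope_same]
  rcases eq_or_ne x y with rfl | hne
  · rwa [dslope_same]
  · have hsub : x - y ≠ 0 := sub_ne_zero.2 hne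
    have hquot : dslope f x y - deriv f a = (x - y)⁻¹ • (f x - f y - (x - y) • deriv f a) := by
      rw [dslope_comm, dslope_of_ne f hne, slope_def_module, smul_sub _ (f x - f y),
        inv_smul_smul₀ hsub]
    rw [hquot, norm_smul, norm_inv, inv_mul_le_iff₀ (norm_pos_iff.2 hsub), mul_comm]
    exact hxy

theorem continuousOn_uncurry_dslope {E : Type*} [NormedAddCommGroup E] [NormedSpace ℂ E]
    [CompleteSpace E] {D : Set ℂ} (hD : IsOpen D) {g : ℂ → E} (hg : DifferentiableOn ℂ g D) :
    ContinuousOn (Function.uncurry (dslope g)) (D ×ˢ D) := by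
  rintro ⟨z, w⟩ ⟨hz : z ∈ D, hw : w ∈ D⟩
  have han : AnalyticAt ℂ g z := hg.analyticAt (hD.mem_nhds hz)
  rcases eq_or_ne z w with rfl | hne
  · exact (continuousAt_uncurry_dslope_self han.hasStrictDerivAt
      han.deriv.continuousAt).continuousWithinAt
  · exact (continuousAt_uncurry_dslope_of_ne hne han.continuousAt
      (hg.continuousOn.continuousAt (hD.mem_nhds hw))).continuousWithinAt

end DSlope

section InvSub

theorem differentiableOn_inv_sub {s : Set ℂ} {w : ℂ} (hw : w ∉ s) :
    DifferentiableOn ℂ (fun z => (z - w)⁻¹) s :=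
  (differentiableOn_id.sub_const w).inv fun _ hz => sub_ne_zero.2 (ne_of_mem_of_not_mem hz hw)

theorem hasDerivAt_log_sub_div_sub {z w w₀ : ℂ} (h : dist w w₀ < dist z w₀) :
    HasDerivAt (fun z => log ((z - w) / (z - w₀))) ((z - w)⁻¹ - (z - w₀)⁻¹) z := by
  have hzw₀ : z - w₀ ≠ 0 := sub_ne_zero.2 (dist_pos.1 (dist_nonneg.trans_lt h))
  have hzw : z - w ≠ 0 := sub_ne_zero.2 fun h' => h.ne (h' ▸ rfl)
  have hslit : (z - w) / (z - w₀) ∈ slitPlane := by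
    have hlt : ‖(w₀ - w) / (z - w₀)‖ < 1 := by
      rw [norm_div, div_lt_one (norm_pos_iff.2 hzw₀), norm_sub_rev]
      simpa only [dist_eq_norm] using h
    have hsplit : (z - w) / (z - w₀) = 1 + (w₀ - w) / (z - w₀) := by
      field_simp
      ring
    exact hsplit ▸ mem_slitPlane_of_norm_lt_one hlt
  have hquot : HasDerivAt (fun z => (z - w) / (z - w₀))
      ((1 * (z - w₀) - (z - w) * 1) / (z - w₀) ^ 2) z :=
    ((hasDerivAt_id z).sub_const w).div ((hasDerivAt_id z).sub_const w₀) hzw₀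
  convert hquot.clog hslit using 1
  field_simp

end InvSub

/-- Formal complex combinations of oriented segments in `ℂ`, the pair `(a, b)` standing for the
segment from `a` to `b`. They replace the piecewise smooth cycles of homology theory. -/
abbrev SegmentChain : Type := ℂ × ℂ →₀ ℂ

namespace SegmentChain

variable {E : Type*} [NormedAddCommGroup E] [NormedSpace ℂ E] {D U : Set ℂ} {c : SegmentChain}
  {p : ℂ × ℂ} {f g : ℂ → E}

/-- The boundary of a chain: endpoint minus starting point on each segment. -/
noncomputable def boundary : SegmentChain →ₗ[ℂ] ℂ →₀ ℂ :=
  Finsupp.linearCombination ℂ fun p => Finsupp.single p.2 1 - Finsupp.single p.1 1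

/-- The integral of `f z dz` along a chain, the form `f z dz` being encoded as `v ↦ v • f z`. -/
noncomputable def integral (f : ℂ → E) : SegmentChain →ₗ[ℂ] E :=
  Finsupp.linearCombination ℂ fun p =>
    ∫ᶜ z in .segment p.1 p.2, ContinuousLinearMap.toSpanSingleton ℂ (f z)

/-- The track of a chain: the union of the segments it involves. -/
def track (c : SegmentChain) : Set ℂ :=
  ⋃ p ∈ c.support, segment ℝ p.1 p.2

/-- The length of a chain, each segment being weighted by the modulus of its coefficient. -/
noncomputable def length (c : SegmentChain) : ℝ :=
  ∑ p ∈ c.support, ‖c p‖ * ‖p.2 - p.1‖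

theorem integral_apply (f : ℂ → E) (c : SegmentChain) : integral f c =
    ∑ p ∈ c.support, c p • ∫ t in (0 : ℝ)..1, (p.2 - p.1) • f (AffineMap.lineMap p.1 p.2 t) := by
  simp [integral, Finsupp.linearCombination_apply, Finsupp.sum, curveIntegral_segment]

theorem track_subset_iff : c.track ⊆ D ↔ ∀ p ∈ c.support, segment ℝ p.1 p.2 ⊆ D :=
  iUnion₂_subset_iff

/-- The cycles of `D`: the chains without boundary all of whose segments lie in `D`. -/
noncomputable def cycles (D : Set ℂ) : Submodule ℂ SegmentChain :=
  Finsupp.supported ℂ ℂ {p | segment ℝ p.1 p.2 ⊆ D} ⊓ LinearMap.ker boundary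

theorem mem_cycles_iff : c ∈ cycles D ↔ c.track ⊆ D ∧ boundary c = 0 :=
  and_congr track_subset_iff.symm LinearMap.mem_ker

theorem isCompact_track (c : SegmentChain) : IsCompact c.track :=
  c.support.isCompact_biUnion fun p _ => by
    rw [segment_eq_image_lineMap]
    exact isCompact_Icc.image AffineMap.lineMap_continuous

theorem lineMap_mem_track (hp : p ∈ c.support) {t : ℝ} (ht : t ∈ uIcc (0 : ℝ) 1) :
    (AffineMap.lineMap p.1 p.2 t : ℂ) ∈ c.track := by
  rw [uIcc_of_le zero_le_one] at ht
  exact mem_biUnion hp (segment_eq_image_lineMap ℝ p.1 p.2 ▸ mem_image_of_mem _ ht)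

theorem continuousOn_comp_lineMap {Y : Type*} [TopologicalSpace Y] {f : ℂ → Y}
    (hf : ContinuousOn f c.track) (hp : p ∈ c.support) :
    ContinuousOn (fun t : ℝ => f (AffineMap.lineMap p.1 p.2 t)) (uIcc 0 1) :=
  hf.comp AffineMap.lineMap_continuous.continuousOn fun _ ht => lineMap_mem_track hp ht

theorem integral_congr (h : EqOn f g c.track) : integral f c = integral g c := by
  simp only [integral_apply]
  refine Finset.sum_congr rfl fun p hp => congrArg (c p • ·) ?_
  exact intervalIntegral.integral_congr fun t ht =>
    congrArg ((p.2 - p.1) • ·) (h (lineMap_mem_track hp ht))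

theorem integral_sub (hf : ContinuousOn f c.track) (hg : ContinuousOn g c.track) :
    integral (fun z => f z - g z) c = integral f c - integral g c := by
  simp only [integral_apply, ← Finset.sum_sub_distrib, ← smul_sub]
  refine Finset.sum_congr rfl fun p hp => ?_
  simp only [smul_sub]
  rw [intervalIntegral.integral_sub, smul_sub]
  exacts [((continuousOn_comp_lineMap hf hp).const_smul _).intervalIntegrable,
    ((continuousOn_comp_lineMap hg hp).const_smul _).intervalIntegrable]

theorem integral_finsetSum {κ : Type*} (s : Finset κ) {f : κ → ℂ → E}
    (hf : ∀ i ∈ s, ContinuousOn (f i) c.track) :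
    integral (fun z => ∑ i ∈ s, f i z) c = ∑ i ∈ s, integral (f i) c := by
  simp only [integral_apply]
  rw [Finset.sum_comm]
  refine Finset.sum_congr rfl fun p hp => ?_
  simp only [Finset.smul_sum]
  rw [intervalIntegral.integral_finsetSum, Finset.smul_sum]
  exact fun i hi => ((continuousOn_comp_lineMap (hf i hi) hp).const_smul _).intervalIntegrable

theorem norm_integral_le {C : ℝ} (hC : ∀ z ∈ c.track, ‖f z‖ ≤ C) :
    ‖integral f c‖ ≤ c.length * C := by
  rw [integral_apply, length, Finset.sum_mul]
  refine norm_sum_le_of_le _ fun p hp => ?_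
  have hseg : ‖∫ t in (0 : ℝ)..1, (p.2 - p.1) • f (AffineMap.lineMap p.1 p.2 t)‖ ≤
      ‖p.2 - p.1‖ * C * |1 - 0| :=
    intervalIntegral.norm_integral_le_of_norm_le_const fun t ht => by
      rw [norm_smul]
      gcongr
      exact hC _ (lineMap_mem_track hp (uIoc_subset_uIcc ht))
  rw [norm_smul, mul_assoc]
  gcongr
  simpa using hseg

theorem integral_smul_const [CompleteSpace E] (f : ℂ → ℂ) (x : E) (c : SegmentChain) :
    integral (fun z => f z • x) c = integral f c • x := by
  simp only [integral_apply, Finset.sum_smul, smul_assoc, ← intervalIntegral.integral_smul_const]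

theorem integral_eq_linearCombination_boundary [CompleteSpace E] {G : ℂ → E}
    (hf : ContinuousOn f c.track) (hG : ∀ z ∈ c.track, HasDerivAt G (f z) z) :
    integral f c = Finsupp.linearCombination ℂ G (boundary c) := by
  rw [integral_apply, boundary, Finsupp.linearCombination_apply ℂ c, Finsupp.sum, map_sum]
  refine Finset.sum_congr rfl fun p hp => ?_
  have hderiv : ∀ t ∈ uIcc (0 : ℝ) 1, HasDerivAt (fun t : ℝ => G (AffineMap.lineMap p.1 p.2 t))
      ((p.2 - p.1) • f (AffineMap.lineMap p.1 p.2 t)) t := fun t ht =>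
    (hG _ (lineMap_mem_track hp ht)).scomp t AffineMap.hasDerivAt_lineMap
  rw [intervalIntegral.integral_eq_sub_of_hasDerivAt hderiv
    ((continuousOn_comp_lineMap hf hp).const_smul _).intervalIntegrable]
  simp

theorem integral_eq_zero_of_isExactOn [CompleteSpace E] (hc : boundary c = 0)
    (hf : ContinuousOn f c.track) (hexact : IsExactOn f c.track) : integral f c = 0 := by
  obtain ⟨G, hG⟩ := hexact
  rw [integral_eq_linearCombination_boundary hf hG, hc, map_zero]

theorem differentiableOn_integral [CompleteSpace E] {k : ℂ → ℂ → E} (hU : IsOpen U)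
    (hk : ContinuousOn (Function.uncurry k) (U ×ˢ c.track))
    (hd : ∀ ζ ∈ c.track, DifferentiableOn ℂ (fun z => k z ζ) U) :
    DifferentiableOn ℂ (fun z => integral (k z) c) U := by
  simp only [integral_apply]
  refine DifferentiableOn.fun_sum fun p hp => DifferentiableOn.const_smul
    (differentiableOn_intervalIntegral_of_param hU ?_ fun t ht =>
      (hd _ (lineMap_mem_track hp ht)).const_smul _) _
  have hmap : ContinuousOn
      (fun q : ℂ × ℝ => ((q.1, AffineMap.lineMap p.1 p.2 q.2) : ℂ × ℂ)) (U ×ˢ uIcc 0 1) :=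
    (continuous_fst.prodMk (AffineMap.lineMap_continuous.comp continuous_snd)).continuousOn
  exact (hk.comp hmap fun q hq => ⟨hq.1, lineMap_mem_track hp hq.2⟩).const_smul (p.2 - p.1)

/-- `2πi` times the winding number of a chain about a point. -/
noncomputable def windingIntegral (c : SegmentChain) (w : ℂ) : ℂ :=
  integral (fun z => (z - w)⁻¹) c

theorem windingIntegral_eq_zero_of_track_subset_ball (hc : boundary c = 0) {x w : ℂ} {r : ℝ}
    (htrack : c.track ⊆ ball x r) (hw : w ∉ ball x r) : c.windingIntegral w = 0 := by
  have hdiff := differentiableOn_inv_sub hw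
  obtain ⟨G, hG⟩ := hdiff.isExactOn_ball
  exact integral_eq_zero_of_isExactOn hc (hdiff.continuousOn.mono htrack)
    ⟨G, fun z hz => hG z (htrack hz)⟩

theorem eventually_windingIntegral_eq (hc : boundary c = 0) {w₀ : ℂ} (hw₀ : w₀ ∉ c.track) :
    ∀ᶠ w in 𝓝 w₀, w ∉ c.track ∧ c.windingIntegral w = c.windingIntegral w₀ := by
  obtain ⟨r, hr, hball⟩ := Metric.isOpen_iff.1 c.isCompact_track.isClosed.isOpen_compl w₀ hw₀
  filter_upwards [ball_mem_nhds w₀ hr] with w hw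
  have hcont : ∀ v ∉ c.track, ContinuousOn (fun z => (z - v)⁻¹) c.track :=
    fun v hv => (differentiableOn_inv_sub hv).continuousOn
  refine ⟨hball hw, sub_eq_zero.1 ?_⟩
  rw [windingIntegral, windingIntegral, ← integral_sub (hcont w (hball hw)) (hcont w₀ hw₀)]
  refine integral_eq_zero_of_isExactOn hc ((hcont w (hball hw)).sub (hcont w₀ hw₀))
    ⟨fun z => log ((z - w) / (z - w₀)), fun z hz => hasDerivAt_log_sub_div_sub ?_⟩
  exact (mem_ball.1 hw).trans_le (not_lt.1 fun hlt => hball hlt hz)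

theorem windingIntegral_eq_of_isPreconnected (hc : boundary c = 0) {S : Set ℂ}
    (hS : IsPreconnected S) (hdisj : Disjoint S c.track) {x y : ℂ} (hx : x ∈ S) (hy : y ∈ S) :
    c.windingIntegral x = c.windingIntegral y :=
  hS.induction₂ (fun x y => c.windingIntegral x = c.windingIntegral y)
    (fun _ hx => nhdsWithin_le_nhds <|
      (eventually_windingIntegral_eq hc (hdisj.notMem_of_mem_left hx)).mono fun _ h => h.2.symm)
    (fun _ _ _ _ _ _ => Eq.trans) (fun _ _ _ _ => Eq.symm) hx hy

theorem windingIntegral_eq_zero_of_frontier (hD : IsOpen D) (hne : D.Nonempty)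
    (hc : boundary c = 0) (htrack : c.track ⊆ D)
    (hfrontier : ∀ w ∈ frontier D, c.windingIntegral w = 0) {w : ℂ} (hw : w ∉ D) :
    c.windingIntegral w = 0 := by
  classical
  let N : ℂ → ℂ := fun w => if w ∈ D then 0 else c.windingIntegral w
  have hN : IsLocallyConstant N := by
    refine (IsLocallyConstant.iff_eventually_eq N).2 fun v => ?_
    by_cases hv : v ∈ D
    · filter_upwards [hD.mem_nhds hv] with u hu
      simp only [N, hu, hv, if_true]
    have hnear := eventually_windingIntegral_eq hc fun h => hv (htrack h)
    by_cases hvD : v ∈ closure D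
    · have hv0 : c.windingIntegral v = 0 :=
        hfrontier v (hD.frontier_eq ▸ ⟨hvD, hv⟩)
      filter_upwards [hnear] with u hu
      simp only [N, hu.2, hv0, ite_self]
    · filter_upwards [hnear, isClosed_closure.isOpen_compl.mem_nhds hvD] with u hu huD
      have hu' : u ∉ D := fun h => huD (subset_closure h)
      simp only [N, hu.2, hv, hu', if_false]
  obtain ⟨z, hz⟩ := hne
  simpa only [N, hw, hz, if_false, if_true] using hN.apply_eq_of_preconnectedSpace w z

/-- `2πi` times the Cauchy transform of `g` along a chain. -/
noncomputable def cauchyTransform (g : ℂ → E) (c : SegmentChain) (z : ℂ) : E :=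
  integral (fun ζ => (ζ - z)⁻¹ • g ζ) c

theorem differentiableOn_cauchyTransform [CompleteSpace E] (hg : ContinuousOn g c.track) :
    DifferentiableOn ℂ (c.cauchyTransform g) c.trackᶜ := by
  have hne : ∀ q ∈ c.trackᶜ ×ˢ c.track, q.2 - q.1 ≠ 0 :=
    fun q hq => sub_ne_zero.2 (ne_of_mem_of_not_mem hq.2 hq.1)
  refine differentiableOn_integral c.isCompact_track.isClosed.isOpen_compl
    (k := fun z ζ => (ζ - z)⁻¹ • g ζ) ?_ fun ζ hζ => ?_
  · exact ((continuousOn_snd.sub continuousOn_fst).inv₀ hne).smul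
      (hg.comp continuousOn_snd fun q hq => hq.2)
  · exact ((differentiableOn_id.const_sub ζ).inv fun z hz => hne (z, ζ) ⟨hz, hζ⟩).smul_const _

theorem tendsto_cauchyTransform_cocompact (hg : ContinuousOn g c.track) :
    Tendsto (c.cauchyTransform g) (cocompact ℂ) (𝓝 0) := by
  obtain ⟨R, hR⟩ := c.isCompact_track.isBounded.subset_closedBall 0
  obtain ⟨M, hM⟩ := c.isCompact_track.exists_bound_of_continuousOn hg
  have hnorm : Tendsto (fun z : ℂ => ‖z‖) (cocompact ℂ) atTop := tendsto_norm_cocompact_atTop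
  have hlim : Tendsto (fun z : ℂ => c.length * ((‖z‖ - R)⁻¹ * M)) (cocompact ℂ) (𝓝 0) := by
    have hinv := tendsto_inv_atTop_zero.comp (tendsto_atTop_add_const_right _ (-R) hnorm)
    simpa only [zero_mul, mul_zero, sub_eq_add_neg, Function.comp_def] using
      (hinv.mul_const M).const_mul c.length
  refine squeeze_zero_norm' ?_ hlim
  filter_upwards [hnorm.eventually_gt_atTop R] with z hz
  refine norm_integral_le fun ζ hζ => ?_
  have hdist : ‖z‖ - R ≤ ‖ζ - z‖ := by
    have := norm_sub_norm_le z ζ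
    rw [norm_sub_rev] at this
    linarith [mem_closedBall_zero_iff.1 (hR hζ)]
  rw [norm_smul, norm_inv]
  exact mul_le_mul (inv_anti₀ (sub_pos.2 hz) hdist) (hM ζ hζ) (norm_nonneg _)
    (inv_nonneg.2 (sub_pos.2 hz).le)

theorem integral_dslope_eq_cauchyTransform [CompleteSpace E] (hg : ContinuousOn g c.track) {z : ℂ}
    (hz : z ∉ c.track) (hN : c.windingIntegral z = 0) :
    integral (dslope g z) c = c.cauchyTransform g z := by
  have hinv : ContinuousOn (fun ζ => (ζ - z)⁻¹) c.track :=
    (differentiableOn_inv_sub hz).continuousOn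
  have hdslope : EqOn (dslope g z) (fun ζ => (ζ - z)⁻¹ • g ζ - (ζ - z)⁻¹ • g z) c.track := by
    intro ζ hζ
    simp only [dslope_of_ne g (ne_of_mem_of_not_mem hζ hz), slope_def_module, smul_sub]
  rw [integral_congr hdslope, integral_sub (hinv.fun_smul hg) (hinv.fun_smul continuousOn_const),
    integral_smul_const, ← windingIntegral, hN, zero_smul, sub_zero, cauchyTransform]

theorem eventually_cocompact_windingIntegral_eq_zero (hc : boundary c = 0) :
    ∀ᶠ w in cocompact ℂ, w ∉ c.track ∧ c.windingIntegral w = 0 := by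
  obtain ⟨r, hr⟩ := c.isCompact_track.isBounded.subset_ball 0
  filter_upwards [(isCompact_closedBall (0 : ℂ) r).compl_mem_cocompact] with w hw
  have hw' : w ∉ ball 0 r := fun h => hw (ball_subset_closedBall h)
  exact ⟨fun h => hw' (hr h), windingIntegral_eq_zero_of_track_subset_ball hc hr hw'⟩

-- Dixon: the integral is an entire function of `z`, as it agrees with the Cauchy transform of `g`
-- near every point outside `D` and near infinity, where that transform vanishes.
theorem integral_dslope_eq_zero [CompleteSpace E] (hD : IsOpen D)
    (hg : DifferentiableOn ℂ g D) (hc : c ∈ cycles D)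
    (hN : ∀ w ∉ D, c.windingIntegral w = 0) (z : ℂ) : integral (dslope g z) c = 0 := by
  obtain ⟨htrack, hboundary⟩ := mem_cycles_iff.1 hc
  have hgc : ContinuousOn g c.track := hg.continuousOn.mono htrack
  have hinside : DifferentiableOn ℂ (fun z => integral (dslope g z) c) D := by
    refine differentiableOn_integral hD
      ((continuousOn_uncurry_dslope hD hg).mono (prod_mono Subset.rfl htrack)) fun ζ hζ => ?_
    simp only [dslope_comm g _ ζ]
    exact (differentiableOn_dslope (hD.mem_nhds (htrack hζ))).2 hg
  have hentire : Differentiable ℂ fun z => integral (dslope g z) c := by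
    intro z
    by_cases hz : z ∈ D
    · exact hinside.differentiableAt (hD.mem_nhds hz)
    have hz' : z ∉ c.track := fun h => hz (htrack h)
    refine ((differentiableOn_cauchyTransform hgc).differentiableAt
      (c.isCompact_track.isClosed.isOpen_compl.mem_nhds hz')).congr_of_eventuallyEq ?_
    filter_upwards [eventually_windingIntegral_eq hboundary hz'] with w hw
    exact integral_dslope_eq_cauchyTransform hgc hw.1 (hw.2.trans (hN z hz))
  refine hentire.apply_eq_of_tendsto_cocompact z ((tendsto_congr' ?_).2
    (tendsto_cauchyTransform_cocompact hgc))
  filter_upwards [eventually_cocompact_windingIntegral_eq_zero hboundary] with w hw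
  exact integral_dslope_eq_cauchyTransform hgc hw.1 hw.2

theorem integral_eq_zero_of_windingIntegral_eq_zero [CompleteSpace E] (hD : IsOpen D)
    (hg : DifferentiableOn ℂ g D) (hc : c ∈ cycles D)
    (hN : ∀ w ∉ D, c.windingIntegral w = 0) : integral g c = 0 := by
  obtain ⟨z₀, hz₀⟩ := (ne_univ_iff_exists_notMem _).1 c.isCompact_track.ne_univ
  rw [← integral_dslope_eq_zero hD ((differentiableOn_id.sub_const z₀).smul hg) hc hN z₀]
  exact integral_congr fun z hz =>
    (dslope_sub_smul_of_ne g (ne_of_mem_of_not_mem hz hz₀)).symm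

theorem exists_boundary_eq (hD : IsOpen D) (hconn : IsPreconnected D) {x y : ℂ} (hx : x ∈ D)
    (hy : y ∈ D) : ∃ c : SegmentChain, c.track ⊆ D ∧
      boundary c = Finsupp.single y 1 - Finsupp.single x 1 := by
  suffices h : ∃ c ∈ Finsupp.supported ℂ ℂ {p : ℂ × ℂ | segment ℝ p.1 p.2 ⊆ D},
      boundary c = Finsupp.single y 1 - Finsupp.single x 1 from
    h.imp fun _ => And.imp_left track_subset_iff.2
  refine hconn.induction₂ (fun x y => ∃ c ∈ Finsupp.supported ℂ ℂ {p : ℂ × ℂ |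
    segment ℝ p.1 p.2 ⊆ D}, boundary c = Finsupp.single y 1 - Finsupp.single x 1) ?_ ?_ ?_ hx hy
  · intro x hx
    obtain ⟨r, hr, hball⟩ := Metric.isOpen_iff.1 hD x hx
    filter_upwards [mem_nhdsWithin_of_mem_nhds (ball_mem_nhds x hr)] with y hy
    refine ⟨Finsupp.single (x, y) 1, Finsupp.single_mem_supported ℂ 1 ?_, by simp [boundary]⟩
    exact ((convex_ball x r).segment_subset (mem_ball_self hr) hy).trans hball
  · rintro x y z - - - ⟨c, hc, hxy⟩ ⟨d, hd, hyz⟩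
    exact ⟨d + c, add_mem hd hc, by rw [map_add, hxy, hyz, sub_add_sub_cancel]⟩
  · rintro x y - - ⟨c, hc, hxy⟩
    exact ⟨-c, neg_mem hc, by rw [map_neg, hxy, neg_sub]⟩

theorem integral_single_eq_sub [CompleteSpace E] {G : ℂ → E} {x y : ℂ}
    (hf : ContinuousOn f (segment ℝ x y)) (hG : ∀ z ∈ segment ℝ x y, HasDerivAt G (f z) z) :
    integral f (Finsupp.single (x, y) 1) = G y - G x := by
  have htrack : track (Finsupp.single (x, y) 1) ⊆ segment ℝ x y :=
    track_subset_iff.2 fun p hp => by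
      rw [Finset.mem_singleton.1 (Finsupp.support_single_subset hp)]
  rw [integral_eq_linearCombination_boundary (hf.mono htrack) fun z hz => hG z (htrack hz)]
  simp [boundary]

theorem isExactOn_of_integral_eq_zero [CompleteSpace E] (hD : IsOpen D) (hconn : IsPreconnected D)
    (hg : DifferentiableOn ℂ g D) (h : ∀ c ∈ cycles D, integral g c = 0) : IsExactOn g D := by
  obtain rfl | ⟨z₀, hz₀⟩ := D.eq_empty_or_nonempty
  · exact ⟨g, fun z hz => hz.elim⟩
  choose! c hc hboundary using fun z (hz : z ∈ D) => exists_boundary_eq hD hconn hz₀ hz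
  refine ⟨fun z => integral g (c z), fun z hz => ?_⟩
  obtain ⟨r, hr, hball⟩ := Metric.isOpen_iff.1 hD z hz
  obtain ⟨P, hP⟩ := (hg.mono hball).isExactOn_ball
  suffices heq : (fun w => integral g (c w)) =ᶠ[𝓝 z] fun w => P w - P z + integral g (c z) from
    (((hP z (mem_ball_self hr)).sub_const _).add_const _).congr_of_eventuallyEq heq
  filter_upwards [ball_mem_nhds z hr] with w hw
  have hsegment : segment ℝ z w ⊆ ball z r :=
    (convex_ball z r).segment_subset (mem_ball_self hr) hw
  have hw' : w ∈ D := hball hw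
  have hcycle : c w - (Finsupp.single (z, w) 1 + c z) ∈ cycles D := by
    refine Submodule.mem_inf.2 ⟨sub_mem (track_subset_iff.1 (hc w hw')) (add_mem
      (Finsupp.single_mem_supported ℂ 1 (hsegment.trans hball)) (track_subset_iff.1 (hc z hz))), ?_⟩
    rw [LinearMap.mem_ker, map_sub, map_add, hboundary w hw', hboundary z hz]
    simp [boundary]
  rw [← sub_eq_zero, ← integral_single_eq_sub (hg.continuousOn.mono (hsegment.trans hball))
    fun v hv => hP v (hsegment hv), ← map_add, ← map_sub]
  exact h _ hcycle

end SegmentChain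

theorem exists_mem_frontier_subset_ball {V : Type*} [NormedAddCommGroup V] [NormedSpace ℝ V]
    [ProperSpace V] [Nontrivial V] {D : Set V} (hD : IsOpen D) (hne : D.Nonempty)
    (hb : Bornology.IsBounded D) : ∃ p ∈ frontier D, D ⊆ ball 0 ‖p‖ := by
  obtain ⟨p, hp, hmax⟩ :=
    hb.isCompact_closure.exists_isMaxOn hne.closure continuous_norm.continuousOn
  have hsub : D ⊆ ball 0 ‖p‖ := by
    rw [← interior_closedBall', hD.subset_interior_iff]
    exact fun z hz => mem_closedBall_zero_iff.2 (hmax (subset_closure hz))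
  exact ⟨p, hD.frontier_eq ▸ ⟨hp, fun h => by simpa using hsub h⟩, hsub⟩

section BoundaryComponents

variable {D : Set ℂ} {ι : Type*} {Γ : ι → Set ℂ} {w : ι → ℂ}

namespace SegmentChain

-- `m` is the index of the component of the boundary that contains a point of maximal modulus.
theorem exists_forall_windingIntegral_eq_zero (hD : IsOpen D) (hne : D.Nonempty)
    (hb : Bornology.IsBounded D) (hfrontier : frontier D = ⋃ i, Γ i)
    (hΓ : ∀ i, IsPreconnected (Γ i)) (hw : ∀ i, w i ∈ Γ i) :
    ∃ m, ∀ c ∈ cycles D, (∀ i ≠ m, c.windingIntegral (w i) = 0) →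
      ∀ z ∉ D, c.windingIntegral z = 0 := by
  obtain ⟨p, hp, hball⟩ := exists_mem_frontier_subset_ball hD hne hb
  obtain ⟨m, hm⟩ := mem_iUnion.1 (hfrontier ▸ hp)
  refine ⟨m, fun c hc hwinding z hz => ?_⟩
  obtain ⟨htrack, hboundary⟩ := mem_cycles_iff.1 hc
  refine windingIntegral_eq_zero_of_frontier hD hne hboundary htrack (fun v hv => ?_) hz
  obtain ⟨i, hi⟩ := mem_iUnion.1 (hfrontier ▸ hv)
  have hdisj : Disjoint (Γ i) c.track :=
    (disjoint_frontier_iff_isOpen.2 hD).mono (hfrontier ▸ subset_iUnion Γ i) htrack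
  rcases eq_or_ne i m with rfl | him
  · rw [windingIntegral_eq_of_isPreconnected hboundary (hΓ i) hdisj hi hm]
    exact windingIntegral_eq_zero_of_track_subset_ball hboundary (htrack.trans hball) (by simp)
  · rw [windingIntegral_eq_of_isPreconnected hboundary (hΓ i) hdisj hi (hw i)]
    exact hwinding i him

end SegmentChain

open SegmentChain in
theorem exists_isExactOn_sub_sum_inv_sub [Fintype ι] [DecidableEq ι] (hD : IsOpen D)
    (hconn : IsConnected D) (hb : Bornology.IsBounded D) (hfrontier : frontier D = ⋃ i, Γ i)
    (hΓ : ∀ i, IsPreconnected (Γ i)) (hw : ∀ i, w i ∈ Γ i) :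
    ∃ m : ι, ∀ g : ℂ → ℂ, DifferentiableOn ℂ g D → ∃ a : {i // i ≠ m} → ℂ,
      IsExactOn (fun z => g z - ∑ i : {i // i ≠ m}, (z - w i)⁻¹ • a i) D := by
  obtain ⟨m, hm⟩ := exists_forall_windingIntegral_eq_zero hD hconn.nonempty hb hfrontier hΓ hw
  refine ⟨m, fun g hg => ?_⟩
  let period (f : ℂ → ℂ) : cycles D →ₗ[ℂ] ℂ := (integral f).domRestrict (cycles D)
  have hspan : period g ∈ Submodule.span ℂ
      (range fun i : {i // i ≠ m} => period fun z => (z - w i)⁻¹) := by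
    refine mem_span_of_iInf_ker_le_ker (ι := {i // i ≠ m}) (𝕜 := ℂ) (E := cycles D) fun c hc => ?_
    exact integral_eq_zero_of_windingIntegral_eq_zero hD hg c.2 <| hm c c.2 fun i hi =>
      (Submodule.mem_iInf _).1 hc ⟨i, hi⟩
  obtain ⟨a, ha⟩ := (Submodule.mem_span_range_iff_exists_fun ℂ).1 hspan
  have hpole : ∀ i : {i // i ≠ m}, DifferentiableOn ℂ (fun z => (z - w i)⁻¹ • a i) D := fun i =>
    (differentiableOn_inv_sub <| (disjoint_frontier_iff_isOpen.2 hD).notMem_of_mem_left <|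
      hfrontier ▸ mem_iUnion_of_mem i.1 (hw i)).smul_const _
  refine ⟨a, isExactOn_of_integral_eq_zero hD hconn.isPreconnected
    (hg.sub (DifferentiableOn.fun_sum fun i _ => hpole i)) fun c hc => ?_⟩
  have hcont : ∀ {f : ℂ → ℂ}, DifferentiableOn ℂ f D → ContinuousOn f c.track :=
    fun hf => hf.continuousOn.mono (mem_cycles_iff.1 hc).1
  rw [integral_sub (hcont hg) (continuousOn_finsetSum _ fun i _ => hcont (hpole i)),
    integral_finsetSum _ fun i _ => hcont (hpole i), sub_eq_zero]
  simp only [SegmentChain.integral_smul_const]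
  simpa [period, mul_comm] using (LinearMap.congr_fun ha ⟨c, hc⟩).symm

end BoundaryComponents

section RealParts

variable {D : Set ℂ} {u v : ℂ → ℝ} {z w b : ℂ}

theorem HarmonicOnR.harmonicOnNhd (hu : HarmonicOnR u D) (hD : IsOpen D) :
    InnerProductSpace.HarmonicOnNhd u D := fun z hz => by
  refine ⟨hu.1.contDiffAt (hD.mem_nhds hz), ?_⟩
  filter_upwards [hD.mem_nhds hz] with v hv
  rw [InnerProductSpace.laplacian_eq_iteratedFDeriv_complexPlane]
  exact hu.2 v hv

/-- The real linear form `v ↦ Re (b v)`, i.e. the value at a point of the real part of a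
differential form `b dz`. -/
noncomputable def reForm : ℂ →L[ℝ] ℂ →L[ℝ] ℝ :=
  (ContinuousLinearMap.compL ℝ ℂ ℂ ℝ reCLM).comp (ContinuousLinearMap.mul ℝ ℂ)

theorem reForm_apply (b v : ℂ) : reForm b v = (b * v).re :=
  rfl

theorem reForm_apply_one_sub_I_mul_apply_I (L : ℂ →L[ℝ] ℝ) : reForm (L 1 - I * L I) = L := by
  ext v
  have hv : L v = v.re * L 1 + v.im * L I := by
    conv_lhs => rw [← re_add_im v, ← mul_one (v.re : ℂ)]
    simp only [← real_smul, map_add, map_smul, smul_eq_mul]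
  rw [hv, reForm_apply]
  simp [mul_comm]

theorem hasFDerivAt_re_reForm {G : ℂ → ℂ} (hG : HasDerivAt G b z) :
    HasFDerivAt (fun z => (G z).re) (reForm b) z :=
  (reCLM.hasFDerivAt.comp z hG.complexToReal_fderiv).congr_fderiv <| by
    ext v
    simp [reForm_apply]

theorem hasFDerivAt_im_reForm {G : ℂ → ℂ} (hG : HasDerivAt G b z) :
    HasFDerivAt (fun z => (G z).im) (reForm (-I * b)) z := by
  simpa using hasFDerivAt_re_reForm (hG.const_mul (-I))

theorem hasDerivAt_add_I_mul (hu : HasFDerivAt u (reForm b) z)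
    (hv : HasFDerivAt v (reForm (-I * b)) z) :
    HasDerivAt (fun z => (u z : ℂ) + I * v z) b z := by
  have hF := (ofRealCLM.hasFDerivAt.comp z hu).add
    ((ofRealCLM.hasFDerivAt.comp z hv).const_mul I)
  refine hasDerivAt_iff_hasFDerivAt.2 (hasFDerivAt_of_restrictScalars ℝ hF ?_)
  ext x
  apply Complex.ext <;> simp [reForm_apply, mul_comm]

theorem hasFDerivAt_log_norm_sub (h : z ≠ w) :
    HasFDerivAt (fun ζ => Real.log ‖ζ - w‖) (reForm (z - w)⁻¹) z := by
  have hzw : z - w ≠ 0 := sub_ne_zero.2 h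
  have hlog : HasDerivAt (fun ζ => log ((ζ - w) / (z - w))) (z - w)⁻¹ z := by
    have hquot : HasDerivAt (fun ζ => (ζ - w) / (z - w)) (1 / (z - w)) z :=
      ((hasDerivAt_id z).sub_const w).div_const _
    simpa [div_self hzw] using hquot.clog (by simp [div_self hzw])
  refine ((hasFDerivAt_re_reForm hlog).add_const (Real.log ‖z - w‖)).congr_of_eventuallyEq ?_
  filter_upwards [isOpen_ne.mem_nhds h] with ζ hζ
  rw [log_re, norm_div, Real.log_div (norm_ne_zero_iff.2 (sub_ne_zero.2 hζ))
    (norm_ne_zero_iff.2 hzw), sub_add_cancel]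

theorem hasFDerivAt_sum_mul_log_norm_sub {κ : Type*} [Fintype κ] {w : κ → ℂ} (h : ∀ i, z ≠ w i)
    (α : κ → ℝ) : HasFDerivAt (fun ζ => ∑ i, α i * Real.log ‖ζ - w i‖)
      (reForm (∑ i, α i • (z - w i)⁻¹)) z := by
  simp only [map_sum, map_smul]
  exact HasFDerivAt.fun_sum fun i _ => (hasFDerivAt_log_norm_sub (h i)).const_mul (α i)

/-- The real functions on `ℂ` that agree on `D` with the real part of a holomorphic function on
`D`, i.e. those with a single-valued conjugate. Their values outside `D` are arbitrary. -/
def holomorphicRealParts (D : Set ℂ) : Submodule ℝ (ℂ → ℝ) where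
  carrier := {u | ∃ F : ℂ → ℂ, DifferentiableOn ℂ F D ∧ ∀ z ∈ D, (F z).re = u z}
  zero_mem' := ⟨0, differentiableOn_const 0, fun _ _ => rfl⟩
  add_mem' := by
    rintro u v ⟨F, hF, hFu⟩ ⟨G, hG, hGv⟩
    exact ⟨F + G, hF.add hG, fun z hz => congrArg₂ (· + ·) (hFu z hz) (hGv z hz)⟩
  smul_mem' := by
    rintro r u ⟨F, hF, hFu⟩
    exact ⟨fun z => r * F z, hF.const_mul _, fun z hz => by simp [hFu z hz]⟩

theorem mem_holomorphicRealParts_iff : u ∈ holomorphicRealParts D ↔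
    ∃ F : ℂ → ℂ, DifferentiableOn ℂ F D ∧ ∀ z ∈ D, (F z).re = u z :=
  Iff.rfl

-- A conjugate is `Im G + ∑ (Im aᵢ) log |z - wᵢ|`: since `a dz / (z - w)` has real part
-- `Re a · d log |z - w| - Im a · d arg (z - w)`, it never involves the multivalued `arg`.
theorem sub_sum_log_norm_mem_holomorphicRealParts {κ : Type*} [Fintype κ] {w a : κ → ℂ} {g : ℂ → ℂ}
    (hu : ∀ z ∈ D, HasFDerivAt u (reForm (g z)) z) (hw : ∀ i, w i ∉ D)
    (hexact : IsExactOn (fun z => g z - ∑ i, (z - w i)⁻¹ • a i) D) :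
    (fun z => u z - ∑ i, (a i).re * Real.log ‖z - w i‖) ∈ holomorphicRealParts D := by
  obtain ⟨G, hG⟩ := hexact
  refine ⟨fun z => ((u z - ∑ i, (a i).re * Real.log ‖z - w i‖ : ℝ) : ℂ) +
    I * ((G z).im + ∑ i, (a i).im * Real.log ‖z - w i‖ : ℝ), fun z hz => ?_, fun z _ => by simp⟩
  have hlog := hasFDerivAt_sum_mul_log_norm_sub fun i => ne_of_mem_of_not_mem hz (hw i)
  have hre := (hu z hz).sub (hlog fun i => (a i).re)
  have him := (hasFDerivAt_im_reForm (hG z hz)).add (hlog fun i => (a i).im)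
  rw [← map_sub] at hre
  rw [← map_add] at him
  refine (hasDerivAt_add_I_mul hre (him.congr_fderiv (congrArg reForm ?_)))
    |>.differentiableAt.differentiableWithinAt
  have hsplit : ∀ i, (z - w i)⁻¹ • a i = (a i).re • (z - w i)⁻¹ + I * (a i).im • (z - w i)⁻¹ :=
    fun i => by
      conv_lhs => rw [← re_add_im (a i)]
      simp only [real_smul, smul_eq_mul]
      ring
  simp only [hsplit, Finset.sum_add_distrib, ← Finset.mul_sum]
  linear_combination (∑ i, (a i).im • (z - w i)⁻¹) * I_mul_I

theorem exists_mkQ_mem_span_log_norm_sub {ι : Type*} [Finite ι] {Γ : ι → Set ℂ} {w : ι → ℂ}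
    (hD : IsOpen D) (hconn : IsConnected D) (hb : Bornology.IsBounded D)
    (hfrontier : frontier D = ⋃ i, Γ i) (hΓ : ∀ i, IsPreconnected (Γ i)) (hw : ∀ i, w i ∈ Γ i) :
    ∃ m : ι, ∀ u : ℂ → ℝ, InnerProductSpace.HarmonicOnNhd u D →
      (holomorphicRealParts D).mkQ u ∈ Submodule.span ℝ (range fun i : {i // i ≠ m} =>
        (holomorphicRealParts D).mkQ fun z => Real.log ‖z - w i‖) := by
  classical
  have := Fintype.ofFinite ι
  obtain ⟨m, hm⟩ := exists_isExactOn_sub_sum_inv_sub hD hconn hb hfrontier hΓ hw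
  refine ⟨m, fun u hu => ?_⟩
  obtain ⟨a, ha⟩ := hm (fun z => fderiv ℝ u z 1 - I * fderiv ℝ u z I) fun z hz =>
    (HarmonicAt.differentiableAt_complex_partial (hu z hz)).differentiableWithinAt
  have hmem := sub_sum_log_norm_mem_holomorphicRealParts (u := u) (fun z hz => by
    rw [reForm_apply_one_sub_I_mul_apply_I]
    exact ((hu z hz).1.differentiableAt two_ne_zero).hasFDerivAt)
    (fun i => (disjoint_frontier_iff_isOpen.2 hD).notMem_of_mem_left
      (hfrontier ▸ mem_iUnion_of_mem i.1 (hw i))) ha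
  refine (Submodule.mem_span_range_iff_exists_fun ℝ).2 ⟨fun i => (a i).re, ?_⟩
  simp only [← map_smul, ← map_sum]
  refine ((Submodule.Quotient.eq _).2 ?_).symm
  convert hmem using 1
  ext z
  simp

end RealParts

section BoundaryValues

-- A point of maximal imaginary part on a level line of `re ∘ F` inside `D` would contradict the
-- openness of `F '' D`, so the level line runs into the frontier.
theorem exists_mem_frontier_eq_of_isOpen_image {X : Type*} [TopologicalSpace X] {D : Set X}
    {F : X → ℂ} {u : X → ℝ} (hD : IsOpen D) (hcompact : IsCompact (closure D))
    (hF : ContinuousOn F D) (hopen : IsOpen (F '' D)) (hu : ContinuousOn u (closure D))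
    (hFu : ∀ z ∈ D, (F z).re = u z) {z : X} (hz : z ∈ D) : ∃ ζ ∈ frontier D, u ζ = u z := by
  by_contra! hfrontier
  have hcompact_level : IsCompact (closure D ∩ u ⁻¹' {u z}) :=
    hcompact.of_isClosed_subset
      (hu.preimage_isClosed_of_isClosed isClosed_closure isClosed_singleton) inter_subset_left
  have hlevel : closure D ∩ u ⁻¹' {u z} ⊆ D := fun ζ hζ => by
    by_contra hζD
    exact hfrontier ζ (hD.frontier_eq ▸ ⟨hζ.1, hζD⟩) hζ.2
  obtain ⟨ζ, hζ, hmax⟩ := hcompact_level.exists_isMaxOn ⟨z, subset_closure hz, rfl⟩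
    (continuous_im.comp_continuousOn (hF.mono hlevel))
  obtain ⟨r, hr, hball⟩ := Metric.isOpen_iff.1 hopen (F ζ) (mem_image_of_mem F (hlevel hζ))
  obtain ⟨ξ, hξ, hFξ⟩ : F ζ + (r / 2 : ℝ) * I ∈ F '' D := hball <| by
    simp [abs_of_pos hr, hr]
  have hξ_level : ξ ∈ closure D ∩ u ⁻¹' {u z} := by
    refine ⟨subset_closure hξ, ?_⟩
    rw [mem_preimage, mem_singleton_iff, ← hFu ξ hξ, hFξ, ← show u ζ = u z from hζ.2,
      ← hFu ζ (hlevel hζ)]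
    simp
  have hlt : (F ζ).im < (F ξ).im := by
    rw [hFξ]
    simpa using hr
  exact hlt.not_ge (hmax hξ_level)

variable {D : Set ℂ} {u : ℂ → ℝ}

theorem exists_eqOn_const_of_finite_image_frontier (hD : IsOpen D) (hconn : IsConnected D)
    (hb : Bornology.IsBounded D) (hu : u ∈ holomorphicRealParts D)
    (hcont : ContinuousOn u (closure D)) (hfin : (u '' frontier D).Finite) :
    ∃ r : ℝ, EqOn u (fun _ => r) (closure D) := by
  obtain ⟨F, hF, hFu⟩ := hu
  rcases (hF.analyticOnNhd hD).is_constant_or_isOpen hconn.isPreconnected with ⟨b, hb⟩ | hopen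
  · have hconst : EqOn u (fun _ => b.re) D := fun z hz => by
      rw [← hFu z hz, hb z hz]
    exact ⟨b.re, hconst.of_subset_closure hcont continuousOn_const subset_closure subset_rfl⟩
  have himage : IsOpen (F '' D) := hopen D subset_rfl hD
  obtain ⟨z, hz⟩ := hconn.nonempty
  have hnhds : re '' (F '' D) ∈ 𝓝 (F z).re :=
    (isOpenMap_re _ himage).mem_nhds (mem_image_of_mem _ (mem_image_of_mem F hz))
  refine absurd (hfin.subset ?_) (infinite_of_mem_nhds _ hnhds)
  rintro _ ⟨_, ⟨ζ, hζ, rfl⟩, rfl⟩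
  rw [hFu ζ hζ]
  exact exists_mem_frontier_eq_of_isOpen_image hD hb.isCompact_closure hF.continuousOn himage
    hcont hFu hζ

theorem linearIndependent_mkQ_of_eq_ite {ι κ : Type*} [Finite ι] [DecidableEq ι]
    {Γ : ι → Set ℂ} (hD : IsOpen D) (hconn : IsConnected D) (hb : Bornology.IsBounded D)
    (hfrontier : frontier D = ⋃ i, Γ i) (hΓ : ∀ i, (Γ i).Nonempty) {e : κ → ι}
    (he : Function.Injective e) {m : ι} (hm : m ∉ range e) {ω : κ → ℂ → ℝ}
    (hcont : ∀ j, ContinuousOn (ω j) (closure D))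
    (hω : ∀ j i, ∀ z ∈ Γ i, ω j z = if i = e j then 1 else 0) :
    LinearIndependent ℝ fun j => (holomorphicRealParts D).mkQ (ω j) := by
  have : Finite κ := Finite.of_injective e he
  have := Fintype.ofFinite κ
  refine Fintype.linearIndependent_iff.2 fun c hc => ?_
  set u : ℂ → ℝ := ∑ j, c j • ω j
  have hu : u ∈ holomorphicRealParts D := by
    rw [← Submodule.Quotient.mk_eq_zero, ← Submodule.mkQ_apply, map_sum]
    simpa only [map_smul] using hc
  have hvalue : ∀ i, ∀ z ∈ Γ i, u z = ∑ j, if i = e j then c j else 0 := fun i z hz => by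
    simp [u, Finset.sum_apply, hω _ i z hz]
  have hfin : (u '' frontier D).Finite := by
    refine (finite_range fun i => ∑ j, if i = e j then c j else 0).subset ?_
    rintro _ ⟨z, hz, rfl⟩
    obtain ⟨i, hi⟩ := mem_iUnion.1 (hfrontier ▸ hz)
    exact ⟨i, (hvalue i z hi).symm⟩
  obtain ⟨r, hr⟩ := exists_eqOn_const_of_finite_image_frontier hD hconn hb hu
    (by
      simp only [u, Finset.sum_fn]
      exact continuousOn_finsetSum _ fun j _ => (hcont j).const_smul (c j)) hfin
  have hsum : ∀ i, (∑ j, if i = e j then c j else 0) = r := fun i => by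
    obtain ⟨z, hz⟩ := hΓ i
    rw [← hvalue i z hz]
    exact hr (frontier_subset_closure (hfrontier ▸ mem_iUnion_of_mem i hz))
  intro j
  have hj : c j = r := by
    rw [← hsum (e j), Finset.sum_eq_single j (fun k _ hk => if_neg (he.ne hk.symm)) (by simp),
      if_pos rfl]
  have hm0 : (∑ j, if m = e j then c j else 0) = 0 :=
    Finset.sum_eq_zero fun j _ => if_neg fun h => hm ⟨j, h.symm⟩
  rw [hj, ← hsum m, hm0]

end BoundaryValues

theorem existsUnique_add_sum_smul_eq_zero {K V ι κ : Type*} [Field K] [AddCommGroup V]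
    [Module K V] [Fintype ι] [Fintype κ] {ℓ : ι → V} {v : κ → V} {x : V}
    (hv : LinearIndependent K v) (hspan : ∀ j, v j ∈ Submodule.span K (range ℓ))
    (hx : x ∈ Submodule.span K (range ℓ)) (hcard : Fintype.card ι ≤ Fintype.card κ) :
    ∃! c : κ → K, x + ∑ j, c j • v j = 0 := by
  have hle : Submodule.span K (range v) ≤ Submodule.span K (range ℓ) :=
    Submodule.span_le.2 (range_subset_iff.2 hspan)
  have : FiniteDimensional K (Submodule.span K (range ℓ)) :=
    FiniteDimensional.span_of_finite K (finite_range ℓ)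
  have heq : Submodule.span K (range v) = Submodule.span K (range ℓ) :=
    Submodule.eq_of_le_of_finrank_le hle <|
      (finrank_range_le_card ℓ).trans (hcard.trans (finrank_span_eq_card hv).ge)
  obtain ⟨c, hc⟩ := (Submodule.mem_span_range_iff_exists_fun K).1 (heq ▸ neg_mem hx)
  refine ⟨c, by simp [hc], fun d hd => funext fun j => ?_⟩
  have hsum : ∑ j, d j • v j = ∑ j, c j • v j := by
    rw [hc, eq_neg_iff_add_eq_zero, add_comm, hd]
  exact congrFun (hv.fintypeLinearCombination_injective hsum) j

/-- Lemma 2.1: on a bounded domain `D` whose boundary has exactly `n ≥ 2` connected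
components, each nondegenerate, every real harmonic function `h` on `D` admits a unique
tuple `(c_1, …, c_{n-1})` of real constants such that `h + ∑ c_j ω_j` has a single-valued
harmonic conjugate, i.e. is the real part of a holomorphic function on `D`. -/
theorem holomorphic_conjugate_correction_exists_unique
    (D : Set ℂ) (hD_open : IsOpen D) (hD_conn : IsConnected D)
    (hD_bdd : Bornology.IsBounded D)
    (n : ℕ) (hn : 2 ≤ n)
    (Γ : Fin n → Set ℂ)
    (hΓ_union : frontier D = ⋃ j, Γ j)
    (hΓ_conn : ∀ j, IsConnected (Γ j))
    (hΓ_closed : ∀ j, IsClosed (Γ j))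
    (hΓ_disj : Pairwise (Function.onFun Disjoint Γ))
    (hΓ_nontriv : ∀ j, (Γ j).Nontrivial)
    (ω : Fin (n - 1) → ℂ → ℝ)
    (hω_cont : ∀ j, ContinuousOn (ω j) (closure D))
    (hω_harm : ∀ j, HarmonicOnR (ω j) D)
    (hω_one : ∀ j, ∀ z ∈ Γ (Fin.castLE (Nat.sub_le n 1) j), ω j z = 1)
    (hω_zero : ∀ j, ∀ k, k ≠ Fin.castLE (Nat.sub_le n 1) j → ∀ z ∈ Γ k, ω j z = 0)
    (h : ℂ → ℝ) (hh : HarmonicOnR h D) :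
    ∃! c : Fin (n - 1) → ℝ, ∃ F : ℂ → ℂ, DifferentiableOn ℂ F D ∧
      ∀ z ∈ D, (F z).re = h z + ∑ j, c j * ω j z := by
  have hlast : (⟨n - 1, by lia⟩ : Fin n) ∉ range (Fin.castLE (Nat.sub_le n 1)) := by
    rintro ⟨j, hj⟩
    exact j.2.ne (congrArg Fin.val hj)
  choose w hw using fun j => (hΓ_conn j).nonempty
  obtain ⟨m, hspan⟩ := exists_mkQ_mem_span_log_norm_sub hD_open hD_conn hD_bdd hΓ_union
    (fun j => (hΓ_conn j).isPreconnected) hw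
  have hindep : LinearIndependent ℝ fun j => (holomorphicRealParts D).mkQ (ω j) :=
    linearIndependent_mkQ_of_eq_ite hD_open hD_conn hD_bdd hΓ_union (fun j => (hΓ_conn j).nonempty)
      (Fin.castLE_injective _) hlast hω_cont fun j k z hz => by
        split_ifs with hk
        exacts [hω_one j z (hk ▸ hz), hω_zero j k hk z hz]
  convert existsUnique_add_sum_smul_eq_zero hindep
    (fun j => hspan _ ((hω_harm j).harmonicOnNhd hD_open)) (hspan h (hh.harmonicOnNhd hD_open))
    (by simp) using 2 with c
  simp only [← map_smul, ← map_sum, ← map_add]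
  rw [Submodule.mkQ_apply, Submodule.Quotient.mk_eq_zero, mem_holomorphicRealParts_iff]
  simp
end

section
/- Let D ⊆ ℂ be a bounded domain whose boundary ∂D has exactly n ≥ 2 connected components Γ_1, …, Γ_n, each containing more than one point. For 1 ≤ j ≤ n−1 let ω_j : cl(D) → ℝ be continuous on cl(D), harmonic on D, with ω_j ≡ 1 on Γ_j and ω_j ≡ 0 on Γ_k for every k ≠ j. If λ_1, …, λ_{n−1} are real numbers such that Σ_{k=1}^{n−1} λ_k ω_k is the real part of a (single-valued) holomorphic function on D, then λ_1 = λ_2 = ⋯ = λ_{n−1} = 0. -/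
open Complex Set

/-!
Suppose that `F` is not constant. Then `F '' D` is open, and so is its trace on every vertical line.
If `t` is a value of `re ∘ F` on `D` but not a boundary value of `∑ λ_k ω_k`, then the level set
`{∑ λ_k ω_k = t}` in the closure of `D` is compact and lies in `D`, so the trace of `F '' D` on the
line `re = t` is nonempty, open and compact, which is absurd. Hence all values of `re ∘ F` are
boundary values. There are only countably many of those, while `re ∘ F` is an open map. So `F` is
constant, and the boundary values `λ_1, …, λ_{n-1}, 0` coincide.
-/

theorem eq_empty_of_isOpen_of_isCompact {Y : Type*} [TopologicalSpace Y] [T2Space Y]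
    [PreconnectedSpace Y] [NoncompactSpace Y] {s : Set Y} (hs_open : IsOpen s)
    (hs_compact : IsCompact s) : s = ∅ :=
  (isClopen_iff.1 ⟨hs_compact.isClosed, hs_open⟩).resolve_right hs_compact.ne_univ

theorem not_isCompact_inter_re_preimage {V : Set ℂ} (hV : IsOpen V) {z : ℂ} (hz : z ∈ V) :
    ¬IsCompact (V ∩ re ⁻¹' {z.re}) := by
  intro hK
  let trace : Set ℝ := (fun y : ℝ => (z.re + y * I : ℂ)) ⁻¹' V
  have htrace_open : IsOpen trace := hV.preimage (by fun_prop)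
  have htrace_eq : trace = im '' (V ∩ re ⁻¹' {z.re}) := by
    ext y
    constructor
    · intro hy
      exact ⟨_, ⟨hy, by simp⟩, by simp⟩
    · rintro ⟨w, ⟨hw, hw_re : w.re = z.re⟩, rfl⟩
      simpa only [trace, mem_preimage, ← hw_re, re_add_im] using hw
  have htrace_empty : trace = ∅ :=
    eq_empty_of_isOpen_of_isCompact htrace_open (htrace_eq ▸ hK.image continuous_im)
  have hz_trace : z.im ∈ trace := by simpa only [trace, mem_preimage, re_add_im] using hz
  exact notMem_empty _ (htrace_empty ▸ hz_trace)

theorem image_subset_image_frontier_of_isOpen_image {X : Type*} [TopologicalSpace X] {D : Set X}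
    {F : X → ℂ} {u : X → ℝ} (hD : IsOpen D) (hD_compact : IsCompact (closure D))
    (hF : ContinuousOn F D) (hFD : IsOpen (F '' D)) (hu : ContinuousOn u (closure D))
    (hre : ∀ z ∈ D, (F z).re = u z) : u '' D ⊆ u '' frontier D := by
  rintro _ ⟨z, hz, rfl⟩
  by_contra hz_frontier
  let K : Set X := closure D ∩ u ⁻¹' {u z}
  have hK : IsCompact K :=
    hD_compact.of_isClosed_subset
      (hu.preimage_isClosed_of_isClosed isClosed_closure isClosed_singleton) inter_subset_left
  have hKD : K ⊆ D := by
    rintro x ⟨hx, hxz⟩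
    by_contra hxD
    exact hz_frontier ⟨x, hD.frontier_eq ▸ ⟨hx, hxD⟩, hxz⟩
  have hFK : F '' K = F '' D ∩ re ⁻¹' {(F z).re} := by
    ext w
    constructor
    · rintro ⟨x, hx, rfl⟩
      exact ⟨mem_image_of_mem F (hKD hx),
        (hre x (hKD hx)).trans (hx.2.trans (hre z hz).symm)⟩
    · rintro ⟨⟨x, hx, rfl⟩, hxz : (F x).re = (F z).re⟩
      rw [hre x hx, hre z hz] at hxz
      exact ⟨x, ⟨subset_closure hx, hxz⟩, rfl⟩
  exact not_isCompact_inter_re_preimage hFD (mem_image_of_mem F hz)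
    (hFK ▸ hK.image_of_continuousOn (hF.mono hKD))

section Holomorphic

variable {E : Type*} [NormedAddCommGroup E] [NormedSpace ℂ E] {D : Set E} {F : E → ℂ}

theorem exists_eqOn_closure_const_of_interior_image_frontier_eq_empty {u : E → ℝ} (hD : IsOpen D)
    (hD_conn : IsPreconnected D) (hD_compact : IsCompact (closure D))
    (hF : AnalyticOnNhd ℂ F D) (hu : ContinuousOn u (closure D))
    (hre : ∀ z ∈ D, (F z).re = u z) (hfrontier : interior (u '' frontier D) = ∅) :
    ∃ c, EqOn u (fun _ => c) (closure D) := by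
  suffices ∃ c, EqOn u (fun _ => c) D from
    this.imp fun _ hc => hc.of_subset_closure hu continuousOn_const subset_closure Subset.rfl
  obtain ⟨w, hw⟩ | hF_open := hF.is_constant_or_isOpen hD_conn
  · exact ⟨w.re, fun z hz => by rw [← hre z hz, hw z hz]⟩
  · have hFD : IsOpen (F '' D) := hF_open D Subset.rfl hD
    have huD : IsOpen (u '' D) := by
      rw [← image_congr hre, ← image_image re F]
      exact isOpenMap_re _ hFD
    have huD_subset : u '' D ⊆ u '' frontier D :=
      image_subset_image_frontier_of_isOpen_image hD hD_compact hF.continuousOn hFD hu hre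
    have huD_empty : u '' D = ∅ :=
      subset_empty_iff.1 (hfrontier ▸ interior_maximal huD_subset huD)
    rw [image_eq_empty.1 huD_empty]
    exact ⟨0, eqOn_empty _ _⟩

variable {κ : Type*} [Countable κ] {Γ : κ → Set E}

theorem boundary_values_eq_of_real_part_holomorphic {u : E → ℝ} {c : κ → ℝ} (hD : IsOpen D)
    (hD_conn : IsPreconnected D) (hD_compact : IsCompact (closure D))
    (hΓ_union : frontier D = ⋃ k, Γ k) (hΓ_nonempty : ∀ k, (Γ k).Nonempty)
    (hF : AnalyticOnNhd ℂ F D) (hu : ContinuousOn u (closure D))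
    (hre : ∀ z ∈ D, (F z).re = u z) (hc : ∀ k, ∀ z ∈ Γ k, u z = c k) (k l : κ) :
    c k = c l := by
  have hfrontier_subset : u '' frontier D ⊆ range c := by
    rw [hΓ_union, image_subset_iff, iUnion_subset_iff]
    exact fun k z hz => ⟨k, (hc k z hz).symm⟩
  have hfrontier : interior (u '' frontier D) = ∅ :=
    interior_eq_empty_iff_dense_compl.2 (((countable_range c).mono hfrontier_subset).dense_compl ℝ)
  obtain ⟨a, ha⟩ := exists_eqOn_closure_const_of_interior_image_frontier_eq_empty
    hD hD_conn hD_compact hF hu hre hfrontier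
  have hc_eq (j : κ) : c j = a := by
    obtain ⟨z, hz⟩ := hΓ_nonempty j
    have hz_frontier : z ∈ frontier D := hΓ_union ▸ mem_iUnion_of_mem j hz
    rw [← hc j z hz, ha (frontier_subset_closure hz_frontier)]
  rw [hc_eq k, hc_eq l]

theorem coeffs_vanish_of_real_part_holomorphic_general {ι : Type*} [Fintype ι] {e : ι ↪ κ} {k₀ : κ}
    {ω : ι → E → ℝ} {lam : ι → ℝ} (hD : IsOpen D) (hD_conn : IsPreconnected D)
    (hD_compact : IsCompact (closure D)) (hΓ_union : frontier D = ⋃ k, Γ k)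
    (hΓ_nonempty : ∀ k, (Γ k).Nonempty) (hk₀ : ∀ j, e j ≠ k₀)
    (hω_cont : ∀ j, ContinuousOn (ω j) (closure D)) (hω_one : ∀ j, ∀ z ∈ Γ (e j), ω j z = 1)
    (hω_zero : ∀ j, ∀ k, k ≠ e j → ∀ z ∈ Γ k, ω j z = 0)
    (hF : AnalyticOnNhd ℂ F D) (hre : ∀ z ∈ D, (F z).re = ∑ j, lam j * ω j z) (j : ι) :
    lam j = 0 := by
  classical
  have hω_eq (i : ι) (k : κ) (z : E) (hz : z ∈ Γ k) : ω i z = if e i = k then 1 else 0 := by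
    split_ifs with h
    · exact hω_one i z (h ▸ hz)
    · exact hω_zero i k (Ne.symm h) z hz
  have hsum_eq (k : κ) (z : E) (hz : z ∈ Γ k) :
      ∑ i, lam i * ω i z = ∑ i, lam i * if e i = k then 1 else 0 :=
    Finset.sum_congr rfl fun i _ => by rw [hω_eq i k z hz]
  have hsum_cont : ContinuousOn (fun z => ∑ i, lam i * ω i z) (closure D) :=
    continuousOn_finsetSum _ fun i _ => (hω_cont i).const_smul (lam i)
  simpa [e.injective.eq_iff, hk₀] using boundary_values_eq_of_real_part_holomorphic
    hD hD_conn hD_compact hΓ_union hΓ_nonempty hF hsum_cont hre hsum_eq (e j) k₀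

end Holomorphic

/-- If a real linear combination `∑ λ_k ω_k` of the harmonic measures `ω_k` of the first
`n - 1` boundary components of a bounded domain `D` (whose boundary has exactly `n ≥ 2`
connected components, each nondegenerate) is the real part of a single-valued holomorphic
function on `D`, then all the coefficients `λ_k` vanish. -/
theorem coeffs_vanish_of_real_part_holomorphic
    (D : Set ℂ) (hD_open : IsOpen D) (hD_conn : IsConnected D)
    (hD_bdd : Bornology.IsBounded D)
    (n : ℕ) (hn : 2 ≤ n)
    (Γ : Fin n → Set ℂ)
    (hΓ_union : frontier D = ⋃ j, Γ j)
    (hΓ_conn : ∀ j, IsConnected (Γ j))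
    (hΓ_closed : ∀ j, IsClosed (Γ j))
    (hΓ_disj : Pairwise (Function.onFun Disjoint Γ))
    (hΓ_nontriv : ∀ j, (Γ j).Nontrivial)
    (ω : Fin (n - 1) → ℂ → ℝ)
    (hω_cont : ∀ j, ContinuousOn (ω j) (closure D))
    (hω_harm : ∀ j, HarmonicOnR (ω j) D)
    (hω_one : ∀ j, ∀ z ∈ Γ (Fin.castLE (Nat.sub_le n 1) j), ω j z = 1)
    (hω_zero : ∀ j, ∀ k, k ≠ Fin.castLE (Nat.sub_le n 1) j → ∀ z ∈ Γ k, ω j z = 0)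
    (lam : Fin (n - 1) → ℝ)
    (hlam : ∃ F : ℂ → ℂ, DifferentiableOn ℂ F D ∧
      ∀ z ∈ D, (F z).re = ∑ k, lam k * ω k z) :
    ∀ k, lam k = 0 := by
  obtain ⟨F, hF, hre⟩ := hlam
  exact coeffs_vanish_of_real_part_holomorphic_general (e := Fin.castLEEmb (Nat.sub_le n 1))
    (k₀ := ⟨n - 1, by lia⟩) hD_open hD_conn.isPreconnected hD_bdd.isCompact_closure hΓ_union
    (fun k => (hΓ_conn k).nonempty) (fun j h => j.isLt.ne (congrArg Fin.val h))
    hω_cont hω_one hω_zero (hF.analyticOnNhd hD_open) hre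
end

section
/- Let D ⊆ ℂ be a bounded domain, let f : ∂D → ℂ be continuous, and let u, v : cl(D) → ℂ be continuous on cl(D), harmonic on D, with u(z) = f(z) and v(z) = z·f(z) for z ∈ ∂D. If u is not holomorphic on D, then the set { a ∈ D : v(a) − a·u(a) = 0 } is a closed, nowhere dense subset of D. -/
open Complex Set

/-- A complex-valued function is harmonic on a set if its real and imaginary parts are. -/
def HarmonicOnC (u : ℂ → ℂ) (s : Set ℂ) : Prop :=
  HarmonicOnR (fun z => (u z).re) s ∧ HarmonicOnR (fun z => (u z).im) s

/-!
For holomorphic `g`, the product rule gives `Δ(g u) = g Δu + 4 g' ∂u/∂z̄`. If the zero set of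
`v - g u` had an interior point, this real-analytic function would vanish on all of the connected
set `D`, so both `u` and `g u = v` would be harmonic and hence `g' ∂u/∂z̄ = 0` on `D`. Near a point
where `g' ≠ 0` this forces `∂u/∂z̄ = 0`, and since `∂u/∂z̄` is real-analytic it vanishes on `D`,
i.e. `u` is holomorphic. The theorem is the case `g z = z`.
-/

open Filter Topology InnerProductSpace Laplacian

section SecondDerivative

variable {𝕜 E F : Type*} [NontriviallyNormedField 𝕜] [NormedAddCommGroup E] [NormedSpace 𝕜 E]
  [NormedAddCommGroup F] [NormedSpace 𝕜 F] {f : E → F} {x : E}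

theorem differentiableAt_fderiv_of_contDiffAt_two (hf : ContDiffAt 𝕜 2 f x) :
    DifferentiableAt 𝕜 (fderiv 𝕜 f) x :=
  (hf.fderiv_right (m := 1) le_rfl).differentiableAt one_ne_zero

theorem iteratedFDeriv_two_eq_fderiv_fderiv_apply (hf : DifferentiableAt 𝕜 (fderiv 𝕜 f) x)
    (a b : E) : iteratedFDeriv 𝕜 2 f x ![a, b] = fderiv 𝕜 (fderiv 𝕜 f · b) x a := by
  simp [iteratedFDeriv_two_apply, fderiv_clm_apply hf (differentiableAt_const b)]

theorem iteratedFDeriv_two_smul {𝔸 : Type*} [NormedRing 𝔸] [NormedAlgebra 𝕜 𝔸] [Module 𝔸 F]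
    [IsBoundedSMul 𝔸 F] [IsScalarTower 𝕜 𝔸 F] {c : E → 𝔸}
    (hc : ContDiffAt 𝕜 2 c x) (hf : ContDiffAt 𝕜 2 f x) (a b : E) :
    iteratedFDeriv 𝕜 2 (c • f) x ![a, b] =
      c x • iteratedFDeriv 𝕜 2 f x ![a, b]
        + (fderiv 𝕜 c x a • fderiv 𝕜 f x b + fderiv 𝕜 c x b • fderiv 𝕜 f x a)
        + iteratedFDeriv 𝕜 2 c x ![a, b] • f x := by
  have hcx : DifferentiableAt 𝕜 c x := hc.differentiableAt two_ne_zero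
  have hfx : DifferentiableAt 𝕜 f x := hf.differentiableAt two_ne_zero
  have hc' := differentiableAt_fderiv_of_contDiffAt_two hc
  have hf' := differentiableAt_fderiv_of_contDiffAt_two hf
  have hcf' := differentiableAt_fderiv_of_contDiffAt_two (hc.smul hf)
  have hcb : DifferentiableAt 𝕜 (fderiv 𝕜 c · b) x :=
    hc'.clm_apply (differentiableAt_const b)
  have hfb : DifferentiableAt 𝕜 (fderiv 𝕜 f · b) x :=
    hf'.clm_apply (differentiableAt_const b)
  have fderiv_smul_near : (fderiv 𝕜 (c • f) · b) =ᶠ[𝓝 x]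
      fun y ↦ c y • fderiv 𝕜 f y b + fderiv 𝕜 c y b • f y := by
    filter_upwards [hc.eventually (by simp), hf.eventually (by simp)] with y hcy hfy
    simp [fderiv_smul (hcy.differentiableAt two_ne_zero) (hfy.differentiableAt two_ne_zero)]
  rw [iteratedFDeriv_two_eq_fderiv_fderiv_apply hcf',
    iteratedFDeriv_two_eq_fderiv_fderiv_apply hc', iteratedFDeriv_two_eq_fderiv_fderiv_apply hf',
    fderiv_smul_near.fderiv_eq, fderiv_fun_add (hcx.fun_smul hfb) (hcb.fun_smul hfx),
    fderiv_fun_smul hcx hfb, fderiv_fun_smul hcb hfx]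
  simp only [add_apply, smul_apply, ContinuousLinearMap.smulRight_apply]
  abel

end SecondDerivative

theorem laplacian_smul {ι E 𝔸 F : Type*} [Fintype ι] [NormedAddCommGroup E]
    [InnerProductSpace ℝ E] [FiniteDimensional ℝ E] [NormedRing 𝔸] [NormedAlgebra ℝ 𝔸]
    [NormedAddCommGroup F] [NormedSpace ℝ F] [Module 𝔸 F] [IsBoundedSMul 𝔸 F]
    [IsScalarTower ℝ 𝔸 F] {c : E → 𝔸} {f : E → F} {x : E} (b : OrthonormalBasis ι ℝ E)
    (hc : ContDiffAt ℝ 2 c x) (hf : ContDiffAt ℝ 2 f x) :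
    Δ (c • f) x =
      c x • Δ f x + 2 • ∑ i, fderiv ℝ c x (b i) • fderiv ℝ f x (b i) + Δ c x • f x := by
  simp only [laplacian_eq_iteratedFDeriv_orthonormalBasis _ b, iteratedFDeriv_two_smul hc hf,
    ← two_nsmul, Finset.sum_add_distrib, Finset.smul_sum, Finset.sum_smul]

section CauchyRiemann

variable {E : Type*} [NormedAddCommGroup E] [NormedSpace ℂ E] {g : ℂ → ℂ} {u : ℂ → E} {z : ℂ}

/-- The Wirtinger derivative `∂u/∂z̄ = (∂u/∂x + i ∂u/∂y) / 2`, which measures the failure of `u` to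
be holomorphic. Where `u` is not real-differentiable it takes the junk value `0`. -/
noncomputable def dbar (u : ℂ → E) (z : ℂ) : E :=
  (2⁻¹ : ℂ) • (fderiv ℝ u z 1 + I • fderiv ℝ u z I)

theorem differentiableAt_iff_dbar_eq_zero :
    DifferentiableAt ℂ u z ↔ DifferentiableAt ℝ u z ∧ dbar u z = 0 := by
  rw [differentiableAt_complex_iff_differentiableAt_real, dbar,
    smul_eq_zero_iff_right (by simp)]
  refine and_congr_right fun _ ↦ ?_
  rw [← smul_right_inj I_ne_zero (M := E), smul_smul, I_mul_I, neg_one_smul, eq_neg_iff_add_eq_zero,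
    add_comm]

theorem laplacian_smul_of_analyticAt (hg : AnalyticAt ℂ g z) (hu : ContDiffAt ℝ 2 u z) :
    Δ (g • u) z = g z • Δ u z + (4 * deriv g z) • dbar u z := by
  have hΔg : Δ g z = 0 := hg.harmonicAt.2.self_of_nhds
  have hdg (w : ℂ) : fderiv ℝ g z w = w * deriv g z := by
    simp [hg.differentiableAt.fderiv_restrictScalars ℝ]
  rw [laplacian_smul orthonormalBasisOneI (hg.contDiffAt.restrict_scalars ℝ) hu, hΔg]
  simp only [Fin.sum_univ_two, coe_orthonormalBasisOneI, Matrix.cons_val_zero, Matrix.cons_val_one,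
    hdg, dbar, zero_smul]
  module

theorem deriv_smul_dbar_eq_zero (hg : AnalyticAt ℂ g z) (hu : HarmonicAt u z)
    (hgu : HarmonicAt (g • u) z) : deriv g z • dbar u z = 0 := by
  have hΔ := laplacian_smul_of_analyticAt hg hu.1
  rw [hgu.2.self_of_nhds, hu.2.self_of_nhds] at hΔ
  simpa using hΔ.symm

theorem analyticAt_dbar [CompleteSpace E] (hu : AnalyticAt ℝ u z) : AnalyticAt ℝ (dbar u) z := by
  have hderiv (w : ℂ) : AnalyticAt ℝ (fderiv ℝ u · w) z :=
    ((ContinuousLinearMap.apply ℝ E w).analyticAt _).comp hu.fderiv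
  exact ((hderiv 1).add ((hderiv I).const_smul (c := I))).const_smul

end CauchyRiemann

theorem analyticAt_of_harmonicAt {F : Type*} [NormedAddCommGroup F] [NormedSpace ℝ F]
    [FiniteDimensional ℝ F] {u : ℂ → F} {z : ℂ} (hu : HarmonicAt u z) : AnalyticAt ℝ u z := by
  let e := (Module.finBasis ℝ F).equivFunL
  have hcoord : AnalyticAt ℝ (e ∘ u) z := by
    rw [analyticAt_pi_iff]
    exact fun i ↦ HarmonicAt.analyticAt
      (hu.comp_CLM ((ContinuousLinearMap.proj i).comp e.toContinuousLinearMap))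
  simpa [Function.comp_def] using (e.symm.analyticAt _).comp hcoord

theorem differentiableOn_of_harmonicOnNhd_smul {E : Type*} [NormedAddCommGroup E] [NormedSpace ℂ E]
    [FiniteDimensional ℂ E] {D : Set ℂ} {g : ℂ → ℂ} {u : ℂ → E} (hD : IsPreconnected D)
    (hg : AnalyticOnNhd ℂ g D) (hg' : ∃ z ∈ D, deriv g z ≠ 0)
    (hu : HarmonicOnNhd u D) (hgu : HarmonicOnNhd (g • u) D) : DifferentiableOn ℂ u D := by
  obtain ⟨z₀, hz₀, hgz₀⟩ := hg'
  have dbar_near : dbar u =ᶠ[𝓝 z₀] 0 := by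
    filter_upwards [(hg z₀ hz₀).eventually_analyticAt, (hu z₀ hz₀).eventually,
      (hgu z₀ hz₀).eventually, (hg z₀ hz₀).deriv.continuousAt.eventually_ne hgz₀]
      with z hgz huz hguz hgz'
    exact (smul_eq_zero_iff_right hgz').1 (deriv_smul_dbar_eq_zero hgz huz hguz)
  have dbar_on : EqOn (dbar u) 0 D :=
    AnalyticOnNhd.eqOn_zero_of_preconnected_of_eventuallyEq_zero
      (fun z hz ↦ analyticAt_dbar (analyticAt_of_harmonicAt (hu z hz))) hD hz₀ dbar_near
  exact fun z hz ↦ (differentiableAt_iff_dbar_eq_zero.2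
    ⟨(hu z hz).1.differentiableAt two_ne_zero, dbar_on hz⟩).differentiableWithinAt

theorem isClosed_and_isNowhereDense_zeroSet {𝕜 E F : Type*} [NontriviallyNormedField 𝕜]
    [NormedAddCommGroup E] [NormedSpace 𝕜 E] [NormedAddCommGroup F] [NormedSpace 𝕜 F]
    {w : E → F} {D : Set E} (hD_open : IsOpen D) (hD_conn : IsPreconnected D)
    (hw : AnalyticOnNhd 𝕜 w D) (hw_ne : ¬ EqOn w 0 D) :
    IsClosed {a : D | w a = 0} ∧ IsNowhereDense {a : D | w a = 0} := by
  have hclosed : IsClosed {a : D | w a = 0} :=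
    isClosed_eq hw.continuousOn.domRestrict continuous_const
  refine ⟨hclosed, hclosed.isNowhereDense_iff.2 ?_⟩
  by_contra! hne
  obtain ⟨a, ha⟩ := hne
  have hw_near : w =ᶠ[𝓝 (a : E)] 0 := by
    rw [← map_nhds_subtype_coe_eq_nhds a.2 (hD_open.mem_nhds a.2)]
    exact mem_interior_iff_mem_nhds.1 ha
  exact hw_ne (hw.eqOn_zero_of_preconnected_of_eventuallyEq_zero hD_conn a.2 hw_near)

section HarmonicOn

variable {s : Set ℂ}

theorem HarmonicOnR.harmonicOnNhd_s6 {u : ℂ → ℝ} (hu : HarmonicOnR u s) (hs : IsOpen s) :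
    HarmonicOnNhd u s := by
  refine fun z hz ↦ ⟨hu.1.contDiffAt (hs.mem_nhds hz), ?_⟩
  filter_upwards [hs.mem_nhds hz] with y hy
  simpa only [laplacian_eq_iteratedFDeriv_complexPlane, Pi.zero_apply] using hu.2 y hy

theorem HarmonicOnC.harmonicOnNhd_s6 {u : ℂ → ℂ} (hu : HarmonicOnC u s) (hs : IsOpen s) :
    HarmonicOnNhd u s := by
  have hre := (hu.1.harmonicOnNhd_s6 hs).comp_CLM ofRealCLM
  have him := (hu.2.harmonicOnNhd_s6 hs).comp_CLM (ContinuousLinearMap.toSpanSingleton ℝ I)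
  convert hre.add him using 1
  ext z
  simp

end HarmonicOn

theorem zero_set_closed_nowhere_dense_general {E : Type*} [NormedAddCommGroup E] [NormedSpace ℂ E]
    [FiniteDimensional ℂ E] {D : Set ℂ} (hD_open : IsOpen D) (hD_conn : IsPreconnected D)
    {g : ℂ → ℂ} (hg : AnalyticOnNhd ℂ g D) (hg' : ∃ z ∈ D, deriv g z ≠ 0)
    {u v : ℂ → E} (hu : HarmonicOnNhd u D) (hv : HarmonicOnNhd v D)
    (hu_nothol : ¬ DifferentiableOn ℂ u D) :
    IsClosed {a : D | v a - g a • u a = 0} ∧ IsNowhereDense {a : D | v a - g a • u a = 0} := by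
  have hw : AnalyticOnNhd ℝ (fun z ↦ v z - g z • u z) D := fun z hz ↦
    (analyticAt_of_harmonicAt (hv z hz)).sub
      ((hg z hz).restrictScalars.smul (analyticAt_of_harmonicAt (hu z hz)))
  refine isClosed_and_isNowhereDense_zeroSet hD_open hD_conn hw fun hw_zero ↦ hu_nothol ?_
  have hgu : HarmonicOnNhd (g • u) D := fun z hz ↦
    (harmonicAt_congr_nhds ((hw_zero.eventuallyEq_of_mem (hD_open.mem_nhds hz)).mono
      fun y hy ↦ sub_eq_zero.1 hy)).1 (hv z hz)
  exact differentiableOn_of_harmonicOnNhd_smul hD_conn hg hg' hu hgu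

/-- If `u`, `v` are the harmonic extensions of `f` and `z·f` to a bounded domain `D` and
`u` is not holomorphic on `D`, then `{a ∈ D : v(a) - a·u(a) = 0}` is a closed, nowhere
dense subset of `D` (with its subspace topology). -/
theorem zero_set_closed_nowhere_dense
    (D : Set ℂ) (hD_open : IsOpen D) (hD_conn : IsConnected D)
    (hD_bdd : Bornology.IsBounded D)
    (f : ℂ → ℂ) (hf : ContinuousOn f (frontier D))
    (u v : ℂ → ℂ)
    (hu_cont : ContinuousOn u (closure D)) (hu_harm : HarmonicOnC u D)
    (hu_bd : ∀ z ∈ frontier D, u z = f z)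
    (hv_cont : ContinuousOn v (closure D)) (hv_harm : HarmonicOnC v D)
    (hv_bd : ∀ z ∈ frontier D, v z = z * f z)
    (hu_nothol : ¬ DifferentiableOn ℂ u D) :
    IsClosed {a : D | v a - (a : ℂ) * u a = 0} ∧
      IsNowhereDense {a : D | v a - (a : ℂ) * u a = 0} := by
  exact zero_set_closed_nowhere_dense_general hD_open hD_conn.isPreconnected analyticOnNhd_id
    (hD_conn.nonempty.imp fun z hz ↦ ⟨hz, by simp⟩) (hu_harm.harmonicOnNhd_s6 hD_open)
    (hv_harm.harmonicOnNhd_s6 hD_open) hu_nothol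
end

section
/- Let Δ be the open unit disc in ℂ. If g : cl(Δ) → ℂ is continuous on the closed unit disc and holomorphic (complex differentiable) at every point of Δ ∖ [0, 1), then g is holomorphic on all of Δ. (Here [0,1) = { x ∈ ℝ : 0 ≤ x < 1 } viewed as a subset of ℂ.) -/
open Complex Set Metric
open scoped Interval

/-!
By Morera's theorem it suffices that the integral of `g` around every rectangle in the disc
vanishes. A rectangle whose interior misses the real axis is handled by Cauchy–Goursat, which needs
only continuity up to the boundary. A rectangle met by the real axis is cut along it into two
rectangles of the first kind; the two integrals along the cut cancel.
-/

section RectangleBoundary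

variable {E : Type*} [NormedAddCommGroup E] {f : ℂ → E} {z w : ℂ} {c : ℝ}

lemma intervalIntegrable_vertical_of_continuousOn_rectangle {a : ℝ}
    (hf : ContinuousOn f (Rectangle z w)) (ha : a ∈ [[z.re, w.re]]) :
    IntervalIntegrable (fun y : ℝ ↦ f (a + y * I)) MeasureTheory.volume z.im w.im :=
  (hf.comp (by fun_prop) fun y hy ↦ by
    simpa [Rectangle, mem_reProdIm] using And.intro ha hy).intervalIntegrable

variable [NormedSpace ℂ E]

/-- The integral of `f` around the boundary of the rectangle with opposite corners `z` and `w`,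
the quantity required to vanish in `Complex.IsConservativeOn`. It starts along the horizontal side
through `z`, so its sign depends on the relative position of the corners. -/
noncomputable def rectangleBoundaryIntegral (f : ℂ → E) (z w : ℂ) : E :=
  wedgeIntegral z w f + wedgeIntegral w z f

lemma rectangleBoundaryIntegral_eq_add_of_mem_uIcc_im
    (hf : ContinuousOn f (Rectangle z w)) (hc : c ∈ [[z.im, w.im]]) :
    rectangleBoundaryIntegral f z w =
      rectangleBoundaryIntegral f z ⟨w.re, c⟩ + rectangleBoundaryIntegral f ⟨z.re, c⟩ w := by
  have vertical_split : ∀ a ∈ [[z.re, w.re]], ∫ y in z.im..w.im, f (a + y * I) =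
      (∫ y in z.im..c, f (a + y * I)) + ∫ y in c..w.im, f (a + y * I) := fun a ha ↦
    have integrable := intervalIntegrable_vertical_of_continuousOn_rectangle hf ha
    (intervalIntegral.integral_add_adjacent_intervals
      (integrable.mono_set (uIcc_subset_uIcc_left hc))
      (integrable.mono_set (uIcc_subset_uIcc_right hc))).symm
  simp only [rectangleBoundaryIntegral, wedgeIntegral_add_wedgeIntegral_eq,
    vertical_split _ left_mem_uIcc, vertical_split _ right_mem_uIcc]
  module

lemma rectangleBoundaryIntegral_eq_zero_of_notMem_Ioo_im
    (hf : ContinuousOn f (Rectangle z w))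
    (hd : DifferentiableOn ℂ f (Rectangle z w \ {p | p.im = c}))
    (hc : c ∉ Ioo (min z.im w.im) (max z.im w.im)) :
    rectangleBoundaryIntegral f z w = 0 := by
  refine (wedgeIntegral_add_wedgeIntegral_eq z w f).trans <|
    integral_boundary_rect_eq_zero_of_continuousOn_of_differentiableOn f z w hf (hd.mono ?_)
  rintro p ⟨hre, him⟩
  exact ⟨⟨Ioo_subset_Icc_self hre, Ioo_subset_Icc_self him⟩, fun hp ↦ hc (hp ▸ him)⟩

lemma rectangleBoundaryIntegral_eq_zero_of_differentiableOn_off_horizontal_line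
    (hf : ContinuousOn f (Rectangle z w))
    (hd : DifferentiableOn ℂ f (Rectangle z w \ {p | p.im = c})) :
    rectangleBoundaryIntegral f z w = 0 := by
  by_cases hc : c ∈ [[z.im, w.im]]
  · have first_subset : Rectangle z ⟨w.re, c⟩ ⊆ Rectangle z w :=
      fun p hp ↦ ⟨hp.1, uIcc_subset_uIcc_left hc hp.2⟩
    have second_subset : Rectangle ⟨z.re, c⟩ w ⊆ Rectangle z w :=
      fun p hp ↦ ⟨hp.1, uIcc_subset_uIcc_right hc hp.2⟩
    rw [rectangleBoundaryIntegral_eq_add_of_mem_uIcc_im hf hc,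
      rectangleBoundaryIntegral_eq_zero_of_notMem_Ioo_im (hf.mono first_subset)
        (hd.mono (sdiff_subset_sdiff_left first_subset)) (by grind),
      rectangleBoundaryIntegral_eq_zero_of_notMem_Ioo_im (hf.mono second_subset)
        (hd.mono (sdiff_subset_sdiff_left second_subset)) (by grind),
      add_zero]
  · exact rectangleBoundaryIntegral_eq_zero_of_notMem_Ioo_im hf hd
      (notMem_subset Ioo_subset_Icc_self hc)

lemma isConservativeOn_of_differentiableOn_off_horizontal_line {U : Set ℂ}
    (hf : ContinuousOn f U) (hd : DifferentiableOn ℂ f (U \ {z | z.im = c})) :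
    IsConservativeOn f U := fun _ _ hU ↦
  eq_neg_of_add_eq_zero_left <|
    rectangleBoundaryIntegral_eq_zero_of_differentiableOn_off_horizontal_line (hf.mono hU)
      (hd.mono (sdiff_subset_sdiff_left hU))

end RectangleBoundary

theorem holomorphic_extension_across_slit_general {E : Type*} [NormedAddCommGroup E]
    [NormedSpace ℂ E] [CompleteSpace E] {f : ℂ → E} {U : Set ℂ} {c : ℝ} (hU : IsOpen U)
    (hf : ContinuousOn f U) (hd : DifferentiableOn ℂ f (U \ {z | z.im = c})) :
    DifferentiableOn ℂ f U :=
  (isConservativeOn_and_continuousOn_iff_isDifferentiableOn hU).mp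
    ⟨isConservativeOn_of_differentiableOn_off_horizontal_line hf hd, hf⟩

/-- If `g` is continuous on the closed unit disc and complex differentiable at every point
of `Δ \ [0,1)`, then `g` is holomorphic on all of `Δ`. -/
theorem holomorphic_extension_across_slit
    (g : ℂ → ℂ)
    (hg_cont : ContinuousOn g (closure (ball (0 : ℂ) 1)))
    (hg_diff : ∀ z ∈ ball (0 : ℂ) 1 \ (Complex.ofReal '' Set.Ico (0 : ℝ) 1),
      DifferentiableAt ℂ g z) :
    DifferentiableOn ℂ g (ball (0 : ℂ) 1) := by
  have slit_subset : Complex.ofReal '' Ico (0 : ℝ) 1 ⊆ {z | z.im = 0} :=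
    image_subset_iff.mpr fun x _ ↦ ofReal_im x
  exact holomorphic_extension_across_slit_general isOpen_ball (hg_cont.mono subset_closure)
    fun z hz ↦ (hg_diff z (sdiff_subset_sdiff_right slit_subset hz)).differentiableWithinAt
end
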